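/- There exists a family of nonnegative real numbers c(σ,τ), indexed by pairs of decorated trees with σ ≺ τ and depending only on α, such that for every seed tree S of size k ≥ 2, every decorated tree τ with w(τ) > 1, and every n ≥ k: E[F_τ(T_{n+1}^S) | T_k^S, …, T_n^S] = (1 + w(τ)/((1+α)n − 2))·F_τ(T_n^S) + (1/((1+α)n − 2))·Σ_{σ ≺ τ} c(σ,τ)·F_σ(T_n^S). In addition, for every n ≥ k: if τ is the single vertex with decoration 0 then F_τ(T_n^S) = n; if τ is the single vertex with decoration 1 then F_τ(T_n^S) = n − 2; and if τ is the two-vertex tree with both decorations 0 then F_τ(T_n^S) = 2n − 2. -/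

import Mathlib

/-!
# The first-moment recurrence for the observables of the affine preferential attachment tree

Write `T^u` for the tree `T` on `n` vertices with a new leaf attached to `u`. Everything reduces to
the deterministic quantity `∑_u (deg u - 1 + α) F_τ(T^u)`, the conditional expectation multiplied by
the total mass `(1 + α) n - 2`. Since a connected graph maps injectively into a forest only as an
induced subgraph (`IsInjHom.adj_iff`), `F_τ` is a sum over injective homomorphisms (`injSum`), and
such maps into `T^u` are split according to the preimage of the new vertex (`sum_split_last`).

* Maps avoiding the new vertex (`sum_embWeight_castSucc`). With `a = deg u - 1`, the degree of `u`
  has grown by one, and `[a + 1]_ℓ = [a]_ℓ + ℓ [a]_{ℓ-1}` together with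
  `(a + α) ℓ [a]_{ℓ-1} = ℓ [a]_ℓ + ℓ (ℓ - 1 + α) [a]_{ℓ-1}` gives
  `((1 + α) n - 2 + |ℓ|) F_τ` plus, for each vertex `z`, a nonnegative multiple of the observable of
  `τ` with the decoration at `z` lowered by one.
* Maps sending `x` to the new vertex. The new vertex has degree one, so only loose leaves `x` of `τ`
  contribute (`leafSum_of_not_loose`). If `y` is the neighbour of `x`, an embedding of `τ ∖ x`
  extends to `x` inside `T` in `deg φ(y) + 1 - deg_τ y` ways (`card_extensions`). Comparing, the
  contribution of `x` is `F_τ + (ℓ(y) + α + deg_τ y - 2) F_{τ∖x}` plus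
  `ℓ(y) (ℓ(y) - 1 + α)` times the observable of `τ ∖ x` with the decoration at `y` lowered by one
  (`leafSum_of_loose`).

Altogether `F_τ` has coefficient `(1 + α) n - 2 + w(τ)`, and all the other decorated trees are
`≺ τ`: removing a loose leaf or lowering a decoration creates at most one loose leaf, which is
compensated by the loss. The coefficient `ℓ(y) + α + deg_τ y - 2` is nonnegative except possibly for
the undecorated edge, which is excluded by `w(τ) > 1`. Finally the chain consists of trees almost
surely (`ae_isTree`), so the deterministic identity `one_step` applies along it.
-/

open MeasureTheory Filter Asymptotics

noncomputable section

namespace AffinePA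

instance (V : Type*) : MeasurableSpace (SimpleGraph V) := ⊤

/-- The degree of a vertex. -/
def degR {V : Type*} (G : SimpleGraph V) (v : V) : ℕ := Nat.card {w // G.Adj v w}

/-- The tree on `n+1` vertices obtained from `G` by attaching the new vertex to `u`. -/
def extendTree {n : ℕ} (G : SimpleGraph (Fin n)) (u : Fin n) : SimpleGraph (Fin (n + 1)) :=
  SimpleGraph.fromRel fun a b =>
    (∃ a' b' : Fin n, a = Fin.castSucc a' ∧ b = Fin.castSucc b' ∧ G.Adj a' b') ∨
      (a = Fin.castSucc u ∧ b = Fin.last n)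

/-- One step of the affine preferential attachment dynamics. -/
def stepMeasure (α : ℝ) {n : ℕ} (G : SimpleGraph (Fin n)) :
    Measure (SimpleGraph (Fin (n + 1))) :=
  ∑ u : Fin n,
    ENNReal.ofReal (((degR G u : ℝ) - 1 + α) / ((1 + α) * (n : ℝ) - 2)) •
      Measure.dirac (extendTree G u)

/-- The law of the α-PA tree with `m` added vertices, started from the seed `S`. -/
def paLaw (α : ℝ) {k : ℕ} (S : SimpleGraph (Fin k)) :
    (m : ℕ) → Measure (SimpleGraph (Fin (k + m)))
  | 0 => Measure.dirac S
  | m + 1 => (paLaw α S m).bind (stepMeasure α)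

/-- The weight `∏_u [deg_T(f u) - 1]_{ℓ u}` of a map `f`. -/
def embWeight {V W : Type*} [Fintype V] (T : SimpleGraph W) (ℓ : V → ℕ) (f : V → W) : ℝ :=
  ∏ u : V, ((degR T (f u) - 1).descFactorial (ℓ u) : ℝ)

/-- The observable `F_{(τ,ℓ)}(T)`. -/
def obsG {V W : Type*} [Fintype V] (τ : SimpleGraph V) (ℓ : V → ℕ) (T : SimpleGraph W) : ℝ :=
  ∑ᶠ φ : τ ↪g T, embWeight T ℓ ⇑φ

/-- The weight `w(τ,ℓ)` of a decorated tree. -/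
def weightG {V : Type*} [Fintype V] (τ : SimpleGraph V) (ℓ : V → ℕ) : ℕ :=
  if Fintype.card V ≤ 2 ∧ ∀ v, ℓ v = 0 then 1
  else (∑ v, ℓ v) + Nat.card {v // degR τ v = 1 ∧ ℓ v = 0}

/-- A decorated tree: a finite graph on `Fin n` with nonnegative integer decorations. -/
structure DecTree where
  n : ℕ
  tree : SimpleGraph (Fin n)
  dec : Fin n → ℕ

def DecTree.wt (τ : DecTree) : ℕ := weightG τ.tree τ.dec

def DecTree.decSum (τ : DecTree) : ℕ := ∑ v, τ.dec v

def DecTree.obs (τ : DecTree) {W : Type*} (T : SimpleGraph W) : ℝ := obsG τ.tree τ.dec T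

/-- The strict partial order `≺` on decorated trees. -/
def DecLt (σ τ : DecTree) : Prop :=
  (σ.wt < τ.wt ∧ σ.n ≤ τ.n) ∨ (σ.wt = τ.wt ∧ σ.n < τ.n) ∨
    (σ.wt = τ.wt ∧ σ.n = τ.n ∧ σ.decSum < τ.decSum)

open Classical in
/-- `F_{τ+τ}(T)`: sum over pairs of embeddings with overlapping images. -/
def obsOverlapG {V W : Type*} [Fintype V] (τ : SimpleGraph V) (ℓ : V → ℕ)
    (T : SimpleGraph W) : ℝ :=
  ∑ᶠ (φ₁ : τ ↪g T) (φ₂ : τ ↪g T),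
    if (Set.range ⇑φ₁ ∩ Set.range ⇑φ₂).Nonempty then
      embWeight T ℓ ⇑φ₁ * embWeight T ℓ ⇑φ₂
    else 0

open Classical in
/-- `F_{τ,σ}(T)`: sum over pairs of embeddings with disjoint images. -/
def obsDisjG {V₁ V₂ W : Type*} [Fintype V₁] [Fintype V₂] (τ : SimpleGraph V₁) (ℓτ : V₁ → ℕ)
    (σ : SimpleGraph V₂) (ℓσ : V₂ → ℕ) (T : SimpleGraph W) : ℝ :=
  ∑ᶠ (φ₁ : τ ↪g T) (φ₂ : σ ↪g T),
    if Disjoint (Set.range ⇑φ₁) (Set.range ⇑φ₂) then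
      embWeight T ℓτ ⇑φ₁ * embWeight T ℓσ ⇑φ₂
    else 0

/-- `f ≈ g` : same order of magnitude, eventually. -/
def asympEquiv (f g : ℕ → ℝ) : Prop :=
  ∃ C : ℝ, 0 < C ∧ ∀ᶠ n in atTop, f n ≤ C * g n ∧ g n ≤ C * f n

/-- Descending factorial `[x]_l` of a real number. -/
def descPoch (x : ℝ) (l : ℕ) : ℝ := ∏ i ∈ Finset.range l, (x - (i : ℝ))

/-- Total variation distance between two measures. -/
def tvDist {X : Type*} [MeasurableSpace X] (μ ν : Measure X) : ℝ :=
  ⨆ s : {s : Set X // MeasurableSet s}, |(μ ↑s).toReal - (ν ↑s).toReal|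

open Classical in
/-- The contribution to `F_τ` of embeddings whose image meets the seed. -/
def obsMeetSeed (k m : ℕ) {r : ℕ} (τ : SimpleGraph (Fin r)) (ℓ : Fin r → ℕ)
    (T : SimpleGraph (Fin (k + m))) : ℝ :=
  ∑ᶠ φ : τ ↪g T,
    if ∃ (x : Fin r) (y : Fin k), φ x = Fin.castAdd m y then embWeight T ℓ ⇑φ else 0

/-- The contribution to `F_τ` of embeddings contained in the seed. -/
def obsInSeed (k m : ℕ) {r : ℕ} (τ : SimpleGraph (Fin r)) (ℓ : Fin r → ℕ)
    (S : SimpleGraph (Fin k)) (T : SimpleGraph (Fin (k + m))) : ℝ :=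
  ∑ᶠ φ : τ ↪g S, embWeight T ℓ fun u => Fin.castAdd m (φ u)

/-- `D_{τ,d}(T)`: the number of perfect embeddings of `(τ,d)` in `T`. -/
def perfCount {V W : Type*} (τ : SimpleGraph V) (d : V → ℕ) (T : SimpleGraph W) : ℕ :=
  Nat.card {φ : τ ↪g T // ∀ u, degR T (φ u) = d u}

/-- `τ` is `(T₁,T₂)`-blind. -/
def IsBlind {V W₁ W₂ : Type*} (τ : SimpleGraph V) (T₁ : SimpleGraph W₁)
    (T₂ : SimpleGraph W₂) : Prop :=
  ∀ d : V → ℕ, (∀ u, 1 ≤ d u) → perfCount τ d T₁ = perfCount τ d T₂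

/-- `D_{σ,τ,d}(T)`: perfect embeddings of `(τ,d)` meeting the seed exactly in `φ(A)`. -/
def perfCountSeed (k m : ℕ) {r : ℕ} (τ : SimpleGraph (Fin r)) (A : Finset (Fin r))
    (d : Fin r → ℕ) (T : SimpleGraph (Fin (k + m))) : ℕ :=
  Nat.card {φ : τ ↪g T //
    (∀ u, degR T (φ u) = d u) ∧ ∀ u : Fin r, (∃ y : Fin k, φ u = Fin.castAdd m y) ↔ u ∈ A}

/-- The σ-algebra generated by `T_0, …, T_m`. -/
def natFilt {Ω : Type*} [MeasurableSpace Ω] {k : ℕ}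
    (T : (m : ℕ) → Ω → SimpleGraph (Fin (k + m))) (m : ℕ) : MeasurableSpace Ω :=
  ⨆ j ∈ Set.Iic m, MeasurableSpace.comap (T j) inferInstance

/-- `(T_m)` is an α-PA chain started from the seed `S`, on the probability space `(Ω,P)`. -/
structure IsPAChain (α : ℝ) {k : ℕ} (S : SimpleGraph (Fin k)) {Ω : Type*} [MeasurableSpace Ω]
    (P : Measure Ω) (T : (m : ℕ) → Ω → SimpleGraph (Fin (k + m))) : Prop where
  isProb : IsProbabilityMeasure P
  meas : ∀ m, Measurable (T m)
  init : ∀ᵐ ω ∂P, T 0 ω = S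
  step : ∀ (m : ℕ) (f : SimpleGraph (Fin (k + (m + 1))) → ℝ),
    P[(fun ω => f (T (m + 1) ω))|natFilt T m] =ᵐ[P]
      fun ω => ∫ G, f G ∂stepMeasure α (T m ω)

/-- The natural filtration of the chain. -/
def natFiltration {Ω : Type*} [mΩ : MeasurableSpace Ω] {k : ℕ}
    (T : (m : ℕ) → Ω → SimpleGraph (Fin (k + m))) (hT : ∀ m, Measurable (T m)) :
    Filtration ℕ mΩ where
  seq := natFilt T
  mono' _ _ hij := biSup_mono fun _ hx => le_trans hx hij
  le' _ := iSup_le fun l => iSup_le fun _ => (hT l).comap_le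

/-- Isomorphism of simple graphs as a setoid. -/
def isoSetoid (n : ℕ) : Setoid (SimpleGraph (Fin n)) where
  r G H := Nonempty (G ≃g H)
  iseqv := ⟨fun G => ⟨RelIso.refl G.Adj⟩, fun ⟨e⟩ => ⟨e.symm⟩, fun ⟨e⟩ ⟨f⟩ => ⟨e.trans f⟩⟩

/-- Isomorphism classes of graphs on `n` vertices. -/
def IsoClass (n : ℕ) : Type := Quotient (isoSetoid n)

instance (n : ℕ) : MeasurableSpace (IsoClass n) := ⊤

/-- The law of the isomorphism class of the α-PA tree with `n` vertices grown from `S`. -/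
def isoClassLaw (α : ℝ) {k : ℕ} (S : SimpleGraph (Fin k)) (n : ℕ) : Measure (IsoClass n) :=
  if h : k ≤ n then
    (paLaw α S (n - k)).map fun G =>
      Quotient.mk (isoSetoid n) (G.map (finCongr (Nat.add_sub_cancel' h)).toEmbedding)
  else 0


/-! ### Degrees and attachment of a leaf -/

lemma degR_eq_card {V : Type*} [Fintype V] (G : SimpleGraph V) (v : V) [DecidablePred (G.Adj v)] :
    degR G v = (Finset.univ.filter fun w => G.Adj v w).card := by
  rw [degR, Nat.card_eq_fintype_card, Fintype.card_subtype]

lemma degR_eq_degree {V : Type*} (G : SimpleGraph V) (v : V) [Fintype (G.neighborSet v)] :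
    degR G v = G.degree v := by
  rw [degR, ← SimpleGraph.card_neighborSet_eq_degree, ← Nat.card_eq_fintype_card]
  rfl

lemma one_le_degR {n : ℕ} (hn : 2 ≤ n) {T : SimpleGraph (Fin n)} (hT : T.IsTree) (v : Fin n) :
    1 ≤ degR T v := by
  classical
  have : Nontrivial (Fin n) := Fin.nontrivial_iff_two_le.2 hn
  rw [degR_eq_degree]
  exact hT.connected.preconnected.degree_pos_of_nontrivial v

/-- The degree sum of a tree, by the handshaking lemma. -/
lemma sum_degR {n : ℕ} {T : SimpleGraph (Fin n)} (hT : T.IsTree) :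
    ∑ v, (degR T v : ℝ) = 2 * (n : ℝ) - 2 := by
  classical
  have h1 := T.sum_degrees_eq_twice_card_edges
  have h2 := hT.card_edgeFinset
  rw [Fintype.card_fin] at h2
  have h3 : ∑ v, (degR T v : ℝ) = ((∑ v, T.degree v : ℕ) : ℝ) := by
    push_cast
    exact Finset.sum_congr rfl fun v _ => by rw [degR_eq_degree]
  have h4 : (T.edgeFinset.card : ℝ) + 1 = n := by exact_mod_cast h2
  rw [h3, h1]
  push_cast
  linarith

section extend

variable {n : ℕ} (G : SimpleGraph (Fin n)) (u : Fin n)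

@[simp] lemma extendTree_castSucc (a b : Fin n) :
    (extendTree G u).Adj a.castSucc b.castSucc ↔ G.Adj a b := by
  have hl : ∀ x : Fin n, x.castSucc ≠ Fin.last n := Fin.castSucc_ne_last
  simp only [extendTree, SimpleGraph.fromRel_adj, hl, and_false, or_false, Fin.castSucc_inj, ne_eq]
  constructor
  · rintro ⟨-, ⟨a', b', rfl, rfl, h⟩ | ⟨a', b', rfl, rfl, h⟩⟩
    exacts [h, h.symm]
  · intro h
    exact ⟨h.ne, Or.inl ⟨a, b, rfl, rfl, h⟩⟩

@[simp] lemma extendTree_castSucc_last (a : Fin n) :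
    (extendTree G u).Adj a.castSucc (Fin.last n) ↔ a = u := by
  have hl : ∀ x : Fin n, x.castSucc ≠ Fin.last n := Fin.castSucc_ne_last
  have hl' : ∀ x : Fin n, Fin.last n ≠ x.castSucc := fun x => (hl x).symm
  simp [extendTree, SimpleGraph.fromRel_adj, hl, hl', Fin.castSucc_inj]

@[simp] lemma extendTree_last_castSucc (a : Fin n) :
    (extendTree G u).Adj (Fin.last n) a.castSucc ↔ a = u := by
  rw [SimpleGraph.adj_comm, extendTree_castSucc_last]

lemma degR_extendTree_castSucc (a : Fin n) :
    degR (extendTree G u) a.castSucc = degR G a + if a = u then 1 else 0 := by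
  classical
  simp only [degR_eq_card, Finset.card_filter]
  rw [Fin.sum_univ_castSucc]
  simp

lemma degR_extendTree_last : degR (extendTree G u) (Fin.last n) = 1 := by
  classical
  simp only [degR_eq_card, Finset.card_filter]
  rw [Fin.sum_univ_castSucc]
  simp

/-- Attaching a leaf to a tree yields a tree: connectedness is clear and the degree sum gives the
right number of edges. -/
lemma extendTree_isTree (hG : G.IsTree) : (extendTree G u).IsTree := by
  classical
  rw [SimpleGraph.isTree_iff_connected_and_card]
  constructor
  · let h : G →g extendTree G u := ⟨Fin.castSucc, fun h => by simpa using h⟩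
    rw [SimpleGraph.connected_iff_exists_forall_reachable]
    refine ⟨u.castSucc, fun w => ?_⟩
    induction w using Fin.lastCases with
    | last => exact SimpleGraph.Adj.reachable (by simp)
    | cast w => exact (hG.connected.preconnected u w).map h
  · have h1 := (extendTree G u).sum_degrees_eq_twice_card_edges
    have h0 := G.sum_degrees_eq_twice_card_edges
    have h2 := hG.card_edgeFinset
    rw [Fintype.card_fin] at h2
    simp only [← degR_eq_degree] at h0 h1
    rw [Fin.sum_univ_castSucc, degR_extendTree_last] at h1
    simp only [degR_extendTree_castSucc, Finset.sum_add_distrib, Finset.sum_ite_eq',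
      Finset.mem_univ, if_true, h0] at h1
    rw [Nat.card_eq_fintype_card, ← SimpleGraph.edgeFinset_card, Nat.card_eq_fintype_card,
      Fintype.card_fin]
    omega

end extend

/-! ### Observables as sums over injective homomorphisms -/

/-- The vertex map `f` is an injective graph homomorphism from `τ` to `T`. -/
def IsInjHom {V W : Type*} (τ : SimpleGraph V) (T : SimpleGraph W) (f : V → W) : Prop :=
  Function.Injective f ∧ ∀ a b, τ.Adj a b → T.Adj (f a) (f b)

/-- Between a connected graph and a forest, an injective homomorphism is an embedding: a path
joining the preimages of two adjacent vertices is mapped to a path, which has to be the edge. -/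
lemma IsInjHom.adj_iff {V W : Type*} {τ : SimpleGraph V} {T : SimpleGraph W} {f : V → W}
    (hf : IsInjHom τ T f) (hτ : τ.Connected) (hT : T.IsAcyclic) (a b : V) :
    T.Adj (f a) (f b) ↔ τ.Adj a b := by
  refine ⟨fun h => ?_, hf.2 a b⟩
  obtain ⟨p, hp⟩ := hτ.exists_isPath a b
  let F : τ →g T := ⟨f, fun h => hf.2 _ _ h⟩
  have hq : (p.map F).IsPath := SimpleGraph.Walk.IsPath.map (f := F) hf.1 hp
  have h1 := (hT.subsingleton_path (f a) (f b)).elim ⟨p.map F, hq⟩ (SimpleGraph.Path.singleton h)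
  have h2 : (p.map F).length = 1 := by
    have := congrArg (fun q => q.1.length) h1
    simpa [SimpleGraph.Path.singleton] using this
  rw [SimpleGraph.Walk.length_map] at h2
  exact SimpleGraph.Walk.adj_of_length_eq_one h2

open Classical in
/-- The sum of the embedding weights over all injective homomorphisms `τ → T`, written as a sum
over all vertex maps. -/
def injSum {V W : Type*} [Fintype V] [DecidableEq V] [Fintype W] (τ : SimpleGraph V) (ℓ : V → ℕ)
    (T : SimpleGraph W) : ℝ :=
  ∑ f : V → W, if IsInjHom τ T f then embWeight T ℓ f else 0

lemma obsG_eq_injSum {V W : Type*} [Fintype V] [DecidableEq V] [Fintype W] {τ : SimpleGraph V}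
    (ℓ : V → ℕ) {T : SimpleGraph W} (hτ : τ.Connected) (hT : T.IsAcyclic) :
    obsG τ ℓ T = injSum τ ℓ T := by
  classical
  have : Finite (τ ↪g T) := Finite.of_injective (fun φ => (φ : V → W)) DFunLike.coe_injective
  let _ := Fintype.ofFinite (τ ↪g T)
  rw [obsG, finsum_eq_sum_of_fintype, injSum]
  refine Fintype.sum_of_injective (fun φ : τ ↪g T => (φ : V → W)) DFunLike.coe_injective _ _ ?_ ?_
  · intro f hf
    rw [if_neg]
    intro h
    exact hf ⟨⟨⟨f, h.1⟩, fun {a b} => h.adj_iff hτ hT a b⟩, rfl⟩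
  · intro φ
    rw [if_pos]
    exact ⟨φ.injective, fun a b h => φ.map_rel_iff.2 h⟩

/-! ### Maps avoiding the new vertex -/

/-- A sum over maps into `Fin (n + 1)` whose terms vanish as soon as the last vertex is hit is a sum
over maps into `Fin n`. -/
lemma sum_eq_sum_castSucc {V : Type*} [Fintype V] [DecidableEq V] {n : ℕ}
    (h : (V → Fin (n + 1)) → ℝ)
    (h0 : ∀ f z, f z = Fin.last n → h f = 0) :
    ∑ f, h f = ∑ g : V → Fin n, h (Fin.castSucc ∘ g) := by
  symm
  refine Fintype.sum_of_injective (fun g : V → Fin n => Fin.castSucc ∘ g)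
    (Function.Injective.comp_left (Fin.castSucc_injective n)) _ _ ?_ (fun _ => rfl)
  intro f hf
  by_contra hne
  have hz : ∀ z, f z ≠ Fin.last n := fun z hz => hne (h0 f z hz)
  exact hf ⟨fun z => (f z).castPred (hz z), by ext z; simp⟩

lemma sum_eq_sum_insertNth {W : Type*} [Fintype W] [DecidableEq W] {N : ℕ} (x : Fin (N + 1))
    (h : (Fin (N + 1) → W) → ℝ) :
    ∑ f, h f = ∑ g : Fin N → W, ∑ w, h (Fin.insertNth x w g) := by
  rw [← (Fin.insertNthEquiv (fun _ => W) x).sum_comp, Fintype.sum_prod_type, Finset.sum_comm]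
  rfl

/-- A sum over injective maps into `Fin (n + 1)` splits according to the preimage of the last
vertex. -/
lemma sum_split_last {N n : ℕ} (h : (Fin (N + 1) → Fin (n + 1)) → ℝ)
    (h0 : ∀ f, ¬ Function.Injective f → h f = 0) :
    ∑ f, h f = ∑ g : Fin (N + 1) → Fin n, h (Fin.castSucc ∘ g) +
      ∑ x, ∑ g : Fin N → Fin n, h (Fin.insertNth x (Fin.last n) (Fin.castSucc ∘ g)) := by
  classical
  have h1 : ∀ f, h f = (if ∀ z, f z ≠ Fin.last n then h f else 0) +
      ∑ x, if f x = Fin.last n then h f else 0 := by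
    intro f
    by_cases hf : Function.Injective f
    · by_cases hl : ∀ z, f z ≠ Fin.last n
      · rw [if_pos hl, Finset.sum_eq_zero fun x _ => if_neg (hl x), add_zero]
      · rw [if_neg hl, zero_add]
        push Not at hl
        obtain ⟨z, hz⟩ := hl
        rw [Finset.sum_eq_single z, if_pos hz]
        · intro b _ hb
          exact if_neg fun hb' => hb (hf (hb'.trans hz.symm))
        · simp
    · simp [h0 f hf]
  rw [Finset.sum_congr rfl fun f _ => h1 f, Finset.sum_add_distrib, Finset.sum_comm]
  congr 1
  · rw [sum_eq_sum_castSucc]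
    · exact Finset.sum_congr rfl fun g _ => if_pos fun z => Fin.castSucc_ne_last _
    · intro f z hz
      exact if_neg fun h => h z hz
  · refine Finset.sum_congr rfl fun x _ => ?_
    rw [sum_eq_sum_insertNth x]
    simp only [Fin.insertNth_apply_same, Finset.sum_ite_eq', Finset.mem_univ, if_true]
    refine sum_eq_sum_castSucc (fun g => h (Fin.insertNth x (Fin.last n) g)) ?_
    intro g z hz
    refine h0 _ fun hi => ?_
    have := @hi x (x.succAbove z) (by simp [hz])
    exact Fin.succAbove_ne x z this.symm

lemma succ_descFactorial_eq (a l : ℕ) :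
    ((a + 1).descFactorial l : ℝ) = a.descFactorial l + l * a.descFactorial (l - 1) := by
  cases l with
  | zero => simp
  | succ l =>
    rw [Nat.succ_descFactorial_succ, Nat.add_sub_cancel]
    rcases le_or_gt l a with h | h
    · rw [Nat.descFactorial_succ]
      push_cast [Nat.cast_sub h]
      ring
    · rw [(Nat.descFactorial_eq_zero_iff_lt).2 h,
        (Nat.descFactorial_eq_zero_iff_lt).2 (h.trans (Nat.lt_succ_self l))]
      simp

lemma mul_descFactorial_eq (a l : ℕ) :
    (a : ℝ) * a.descFactorial l = a.descFactorial (l + 1) + l * a.descFactorial l := by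
  rcases le_or_gt l a with h | h
  · rw [Nat.descFactorial_succ]
    push_cast [Nat.cast_sub h]
    ring
  · rw [(Nat.descFactorial_eq_zero_iff_lt).2 h,
      (Nat.descFactorial_eq_zero_iff_lt).2 (h.trans (Nat.lt_succ_self l))]
    simp

lemma mul_descFactorial_pred (α : ℝ) (a l : ℕ) :
    ((a : ℝ) + α) * (l * a.descFactorial (l - 1)) =
      l * a.descFactorial l + l * (l - 1 + α) * a.descFactorial (l - 1) := by
  cases l with
  | zero => simp
  | succ l =>
    have := mul_descFactorial_eq a l
    rw [Nat.add_sub_cancel]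
    push_cast
    linear_combination ((l : ℝ) + 1) * this

/-- Changing the decoration at one vertex changes one factor of the embedding weight. -/
lemma embWeight_update {V W : Type*} [Fintype V] [DecidableEq V] (T : SimpleGraph W) (ℓ : V → ℕ)
    (f : V → W) (y : V) (j : ℕ) :
    embWeight T (Function.update ℓ y j) f = ((degR T (f y) - 1).descFactorial j : ℝ) *
      ∏ z ∈ Finset.univ.erase y, ((degR T (f z) - 1).descFactorial (ℓ z) : ℝ) := by
  rw [embWeight, ← Finset.mul_prod_erase _ _ (Finset.mem_univ y), Function.update_self]
  congr 1
  refine Finset.prod_congr rfl fun z hz => ?_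
  rw [Function.update_of_ne (Finset.ne_of_mem_erase hz)]

lemma embWeight_eq_mul {V W : Type*} [Fintype V] [DecidableEq V] (T : SimpleGraph W) (ℓ : V → ℕ)
    (f : V → W) (y : V) :
    embWeight T ℓ f = ((degR T (f y) - 1).descFactorial (ℓ y) : ℝ) *
      ∏ z ∈ Finset.univ.erase y, ((degR T (f z) - 1).descFactorial (ℓ z) : ℝ) := by
  conv_lhs => rw [← Function.update_eq_self y ℓ]
  exact embWeight_update T ℓ f y (ℓ y)

lemma isInjHom_castSucc {V : Type*} {n : ℕ} {τ : SimpleGraph V} {T : SimpleGraph (Fin n)}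
    (u : Fin n) (g : V → Fin n) :
    IsInjHom τ (extendTree T u) (Fin.castSucc ∘ g) ↔ IsInjHom τ T g := by
  simp only [IsInjHom, Function.comp_apply, extendTree_castSucc]
  rw [Function.Injective.of_comp_iff (Fin.castSucc_injective n)]

/-- Attaching a leaf at the image of `z` raises the degree there by one, so that
`[a + 1]_ℓ = [a]_ℓ + ℓ [a]_{ℓ - 1}` applies to the factor at `z`. -/
lemma embWeight_extend_self {V : Type*} [Fintype V] [DecidableEq V] {n : ℕ}
    {T : SimpleGraph (Fin n)} (hd : ∀ v, 1 ≤ degR T v) (ℓ : V → ℕ) (g : V → Fin n)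
    (hg : Function.Injective g) (z : V) :
    embWeight (extendTree T (g z)) ℓ (Fin.castSucc ∘ g) =
      embWeight T ℓ g + (ℓ z : ℝ) * embWeight T (Function.update ℓ z (ℓ z - 1)) g := by
  rw [embWeight_eq_mul _ _ _ z, embWeight_eq_mul T ℓ g z, embWeight_update]
  have h1 : ∀ b ∈ Finset.univ.erase z,
      ((degR (extendTree T (g z)) ((Fin.castSucc ∘ g) b) - 1).descFactorial (ℓ b) : ℝ) =
        (degR T (g b) - 1).descFactorial (ℓ b) := by
    intro b hb
    have : g b ≠ g z := fun h => (Finset.ne_of_mem_erase hb) (hg h)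
    simp [degR_extendTree_castSucc, this]
  rw [Finset.prod_congr rfl h1]
  have h2 : degR (extendTree T (g z)) ((Fin.castSucc ∘ g) z) - 1 = degR T (g z) - 1 + 1 := by
    have := hd (g z)
    simp [degR_extendTree_castSucc]
    omega
  rw [h2, succ_descFactorial_eq]
  ring

lemma mul_embWeight_update_pred {V : Type*} [Fintype V] [DecidableEq V] {n : ℕ} (α : ℝ)
    {T : SimpleGraph (Fin n)} (hd : ∀ v, 1 ≤ degR T v) (ℓ : V → ℕ) (g : V → Fin n) (z : V) :
    ((degR T (g z) : ℝ) - 1 + α) * ((ℓ z : ℝ) * embWeight T (Function.update ℓ z (ℓ z - 1)) g) =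
      (ℓ z : ℝ) * embWeight T ℓ g +
        (ℓ z : ℝ) * (ℓ z - 1 + α) * embWeight T (Function.update ℓ z (ℓ z - 1)) g := by
  rw [embWeight_update, embWeight_eq_mul T ℓ g z]
  have h3 := mul_descFactorial_pred α (degR T (g z) - 1) (ℓ z)
  rw [Nat.cast_sub (hd (g z)), Nat.cast_one] at h3
  linear_combination (∏ b ∈ Finset.univ.erase z,
    ((degR T (g b) - 1).descFactorial (ℓ b) : ℝ)) * h3

/-- Weighted effect of raising the degree of a random vertex `u` by one on a fixed embedding. -/
lemma sum_embWeight_castSucc {V : Type*} [Fintype V] [DecidableEq V] {n : ℕ} (α : ℝ)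
    {T : SimpleGraph (Fin n)} (hd : ∀ v, 1 ≤ degR T v) (ℓ : V → ℕ) (g : V → Fin n)
    (hg : Function.Injective g) :
    ∑ u, ((degR T u : ℝ) - 1 + α) * embWeight (extendTree T u) ℓ (Fin.castSucc ∘ g) =
      ((∑ u, ((degR T u : ℝ) - 1 + α)) + ∑ z, (ℓ z : ℝ)) * embWeight T ℓ g +
      ∑ z, (ℓ z : ℝ) * (ℓ z - 1 + α) * embWeight T (Function.update ℓ z (ℓ z - 1)) g := by
  classical
  have hE : ∀ u, embWeight (extendTree T u) ℓ (Fin.castSucc ∘ g) = embWeight T ℓ g +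
      ∑ z, if g z = u then
        (ℓ z : ℝ) * embWeight T (Function.update ℓ z (ℓ z - 1)) g else 0 := by
    intro u
    by_cases hu : ∃ z, g z = u
    · obtain ⟨z, rfl⟩ := hu
      rw [Finset.sum_eq_single z (fun b _ hb => if_neg fun h => hb (hg h)) (by simp), if_pos rfl,
        embWeight_extend_self hd ℓ g hg]
    · push Not at hu
      rw [Finset.sum_eq_zero fun z _ => if_neg (hu z), add_zero]
      refine Finset.prod_congr rfl fun z _ => ?_
      simp [degR_extendTree_castSucc, hu z]
  have key : ∀ c : Fin n → ℝ,
      ∑ u, c u * embWeight (extendTree T u) ℓ (Fin.castSucc ∘ g) =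
        (∑ u, c u) * embWeight T ℓ g +
          ∑ z, c (g z) * ((ℓ z : ℝ) * embWeight T (Function.update ℓ z (ℓ z - 1)) g) := by
    intro c
    simp only [hE, mul_add, Finset.sum_add_distrib, Finset.mul_sum, mul_ite, mul_zero]
    rw [Finset.sum_comm (f := fun u z => if g z = u then _ else _)]
    simp only [Finset.sum_ite_eq, Finset.mem_univ, if_true, Finset.sum_mul]
  rw [key, add_mul, Finset.sum_mul Finset.univ (fun z => (ℓ z : ℝ)), add_assoc,
    ← Finset.sum_add_distrib]
  congr 1
  exact Finset.sum_congr rfl fun z _ => mul_embWeight_update_pred α hd ℓ g z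

/-! ### Maps using the new vertex -/

section leaf

variable {N : ℕ} {τ : SimpleGraph (Fin (N + 1))} {x : Fin (N + 1)} {y : Fin N}

lemma isInjHom_insertNth {W : Type*} (hy : ∀ z, τ.Adj x z ↔ z = x.succAbove y)
    (T : SimpleGraph W) (w : W) (g : Fin N → W) :
    IsInjHom τ T (Fin.insertNth x w g) ↔
      IsInjHom (τ.comap x.succAbove) T g ∧ (∀ z, g z ≠ w) ∧ T.Adj (g y) w := by
  have hy' : ∀ z, τ.Adj (x.succAbove z) x ↔ z = y := fun z => by
    rw [SimpleGraph.adj_comm, hy, Fin.succAbove_right_inj]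
  constructor
  · rintro ⟨hi, ha⟩
    refine ⟨⟨fun a b hab => ?_, fun a b hab => ?_⟩, fun z hz => ?_, ?_⟩
    · exact Fin.succAbove_right_injective (p := x) (hi (by simpa using hab))
    · simpa using ha (x.succAbove a) (x.succAbove b) hab
    · exact Fin.succAbove_ne x z (hi (by simpa using hz))
    · simpa using ha (x.succAbove y) x ((hy' y).2 rfl)
  · rintro ⟨⟨hi, ha⟩, hw, hadj⟩
    refine ⟨fun a => ?_, fun a => ?_⟩
    · refine x.succAboveCases ?_ (fun a => ?_) a <;> intro b <;>
        refine x.succAboveCases ?_ (fun b => ?_) b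
      · simp
      · simpa using fun h => absurd h.symm (hw b)
      · simpa using fun h => absurd h (hw a)
      · simpa using fun h => hi h
    · refine x.succAboveCases ?_ (fun a => ?_) a <;> intro b <;>
        refine x.succAboveCases ?_ (fun b => ?_) b
      · simp
      · simp only [Fin.insertNth_apply_same, Fin.insertNth_apply_succAbove]
        rw [SimpleGraph.adj_comm, hy']
        rintro rfl
        exact hadj.symm
      · simp only [Fin.insertNth_apply_same, Fin.insertNth_apply_succAbove, hy']
        rintro rfl
        exact hadj
      · simpa using ha a b

lemma embWeight_insertNth {W : Type*} (T : SimpleGraph W) (ℓ : Fin (N + 1) → ℕ) (hℓ : ℓ x = 0)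
    (w : W) (g : Fin N → W) :
    embWeight T ℓ (Fin.insertNth x w g) = embWeight T (ℓ ∘ x.succAbove) g := by
  rw [embWeight, Fin.prod_univ_succAbove _ x]
  simp [hℓ, embWeight]

lemma degR_comap_succAbove (hy : ∀ z, τ.Adj x z ↔ z = x.succAbove y) :
    degR τ (x.succAbove y) = degR (τ.comap x.succAbove) y + 1 := by
  classical
  simp only [degR_eq_card, Finset.card_filter]
  rw [Fin.sum_univ_succAbove _ x, if_pos ((hy _).2 rfl).symm, add_comm]
  rfl

open Classical in
/-- Extending an embedding of `τ ∖ x` to the leaf `x`: the admissible images of `x` are the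
neighbours of the image of `y` which are not already images of neighbours of `y`. -/
lemma card_extensions {n : ℕ} {T : SimpleGraph (Fin n)} (hT : T.IsAcyclic)
    (hy : ∀ z, τ.Adj x z ↔ z = x.succAbove y) (hc : (τ.comap x.succAbove).Connected)
    {g : Fin N → Fin n} (hg : IsInjHom (τ.comap x.succAbove) T g) :
    ((Finset.univ.filter fun w => (∀ z, g z ≠ w) ∧ T.Adj (g y) w).card : ℝ) =
      degR T (g y) + 1 - degR τ (x.succAbove y) := by
  have h1 : (Finset.univ.filter fun w => T.Adj (g y) w) =
      (Finset.univ.filter fun w => (∀ z, g z ≠ w) ∧ T.Adj (g y) w) ∪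
        (Finset.univ.filter fun z => (τ.comap x.succAbove).Adj y z).image g := by
    ext w
    simp only [Finset.mem_filter_univ, Finset.mem_union, Finset.mem_image]
    constructor
    · intro h
      by_cases hw : ∀ z, g z ≠ w
      · exact Or.inl ⟨hw, h⟩
      · push Not at hw
        obtain ⟨z, rfl⟩ := hw
        exact Or.inr ⟨z, (hg.adj_iff hc hT _ _).1 h, rfl⟩
    · rintro (h | ⟨z, hz, rfl⟩)
      exacts [h.2, hg.2 _ _ hz]
  have h2 : Disjoint (Finset.univ.filter fun w => (∀ z, g z ≠ w) ∧ T.Adj (g y) w)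
      ((Finset.univ.filter fun z => (τ.comap x.succAbove).Adj y z).image g) := by
    rw [Finset.disjoint_left]
    intro w hw hw'
    obtain ⟨z, -, rfl⟩ := Finset.mem_image.1 hw'
    exact (Finset.mem_filter_univ _).1 hw |>.1 z rfl
  have h3 := congrArg Finset.card h1
  rw [Finset.card_union_of_disjoint h2, Finset.card_image_of_injective _ hg.1, ← degR_eq_card,
    ← degR_eq_card] at h3
  rw [degR_comap_succAbove hy, h3]
  push_cast
  ring

open Classical in
/-- The observable of `τ` as a sum over the embeddings of `τ ∖ x`, for a loose leaf `x`. -/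
lemma injSum_eq_sum_extensions {n : ℕ} {T : SimpleGraph (Fin n)} (hT : T.IsAcyclic)
    (hy : ∀ z, τ.Adj x z ↔ z = x.succAbove y) (hc : (τ.comap x.succAbove).Connected)
    (ℓ : Fin (N + 1) → ℕ) (hℓ : ℓ x = 0) :
    injSum τ ℓ T = ∑ g : Fin N → Fin n, if IsInjHom (τ.comap x.succAbove) T g then
      ((degR T (g y) : ℝ) + 1 - degR τ (x.succAbove y)) * embWeight T (ℓ ∘ x.succAbove) g
      else 0 := by
  rw [injSum, sum_eq_sum_insertNth x]
  refine Finset.sum_congr rfl fun g _ => ?_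
  simp only [isInjHom_insertNth hy, embWeight_insertNth T ℓ hℓ]
  by_cases hg : IsInjHom (τ.comap x.succAbove) T g
  · simp only [hg, true_and, if_true]
    rw [← card_extensions hT hy hc hg, ← Finset.sum_filter, Finset.sum_const, nsmul_eq_mul]
  · simp [hg]

open Classical in
/-- The contribution to the expected observable after one step, multiplied by the total mass
`(1 + α) n - 2`, of the embeddings which map `x` to the new vertex. -/
def leafSum (α : ℝ) (τ : SimpleGraph (Fin (N + 1))) (ℓ : Fin (N + 1) → ℕ) (x : Fin (N + 1))
    {n : ℕ} (T : SimpleGraph (Fin n)) : ℝ :=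
  ∑ u, ((degR T u : ℝ) - 1 + α) * ∑ g : Fin N → Fin n,
    if IsInjHom τ (extendTree T u) (Fin.insertNth x (Fin.last n) (Fin.castSucc ∘ g)) then
      embWeight (extendTree T u) ℓ (Fin.insertNth x (Fin.last n) (Fin.castSucc ∘ g)) else 0

lemma leafSum_of_loose (α : ℝ) {n : ℕ} {T : SimpleGraph (Fin n)} (hT : T.IsAcyclic)
    (hd : ∀ v, 1 ≤ degR T v) (hy : ∀ z, τ.Adj x z ↔ z = x.succAbove y)
    (hc : (τ.comap x.succAbove).Connected) (ℓ : Fin (N + 1) → ℕ) (hℓ : ℓ x = 0) :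
    leafSum α τ ℓ x T = injSum τ ℓ T +
      ((ℓ (x.succAbove y) : ℝ) + α + degR τ (x.succAbove y) - 2) *
        injSum (τ.comap x.succAbove) (ℓ ∘ x.succAbove) T +
      (ℓ (x.succAbove y) : ℝ) * (ℓ (x.succAbove y) - 1 + α) * injSum (τ.comap x.succAbove)
        (Function.update (ℓ ∘ x.succAbove) y (ℓ (x.succAbove y) - 1)) T := by
  classical
  have h1 : leafSum α τ ℓ x T = ∑ g : Fin N → Fin n, if IsInjHom (τ.comap x.succAbove) T g then
      ((degR T (g y) : ℝ) - 1 + α) *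
        embWeight (extendTree T (g y)) (ℓ ∘ x.succAbove) (Fin.castSucc ∘ g) else 0 := by
    simp only [leafSum, Finset.mul_sum]
    rw [Finset.sum_comm]
    refine Finset.sum_congr rfl fun g _ => ?_
    have hl : ∀ z, Fin.castSucc (g z) ≠ Fin.last n := fun z => Fin.castSucc_ne_last _
    simp only [isInjHom_insertNth hy, isInjHom_castSucc, embWeight_insertNth _ ℓ hℓ,
      Function.comp_apply, extendTree_castSucc_last, hl, ne_eq, not_false_eq_true, implies_true,
      true_and]
    by_cases hg : IsInjHom (τ.comap x.succAbove) T g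
    · simp [hg]
    · simp [hg]
  rw [h1, injSum_eq_sum_extensions hT hy hc ℓ hℓ, injSum, injSum, Finset.mul_sum, Finset.mul_sum,
    ← Finset.sum_add_distrib, ← Finset.sum_add_distrib]
  refine Finset.sum_congr rfl fun g _ => ?_
  by_cases hg : IsInjHom (τ.comap x.succAbove) T g
  · simp only [hg, if_true]
    rw [embWeight_extend_self hd _ g hg.1 y]
    have := mul_embWeight_update_pred α hd (ℓ ∘ x.succAbove) g y
    simp only [Function.comp_apply] at this ⊢
    linear_combination this
  · simp [hg]

lemma leafSum_of_not_loose (α : ℝ) {n : ℕ} (T : SimpleGraph (Fin n)) (hτ : τ.Connected)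
    (ℓ : Fin (N + 1) → ℕ) (hw : 1 < weightG τ ℓ) (hx : ¬ (degR τ x = 1 ∧ ℓ x = 0)) :
    leafSum α τ ℓ x T = 0 := by
  classical
  refine Finset.sum_eq_zero fun u _ => mul_eq_zero_of_right _ (Finset.sum_eq_zero fun g _ => ?_)
  by_cases hℓ : ℓ x = 0
  · refine if_neg fun hf => ?_
    have hdx : degR τ x ≠ 1 := fun h => hx ⟨h, hℓ⟩
    have h2 : 2 ≤ degR τ x := by
      rcases Nat.lt_or_ge (degR τ x) 2 with h | h
      · exfalso
        have h0 : degR τ x = 0 := by omega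
        rcases Nat.eq_zero_or_pos N with rfl | hN
        · have hz : ∀ v, ℓ v = 0 := fun v => by rw [(Fin.subsingleton_one).elim v x, hℓ]
          rw [weightG, if_pos ⟨by simp, hz⟩] at hw
          exact lt_irrefl _ hw
        · have : Nontrivial (Fin (N + 1)) := Fin.nontrivial_iff_two_le.2 (by omega)
          have := hτ.preconnected.degree_pos_of_nontrivial x
          rw [← degR_eq_degree, h0] at this
          exact lt_irrefl _ this
      · exact h
    rw [degR_eq_card] at h2
    obtain ⟨a, ha, b, hb, hab⟩ := Finset.one_lt_card.1 h2
    rw [Finset.mem_filter_univ] at ha hb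
    -- The new vertex has a single neighbour, so two neighbours of `x` would have the same image.
    have key : ∀ z, τ.Adj x z →
        Fin.insertNth (α := fun _ => Fin (n + 1)) x (Fin.last n) (Fin.castSucc ∘ g) z =
          u.castSucc := by
      intro z
      refine x.succAboveCases ?_ (fun z => ?_) z
      · simp
      · intro hz
        have := hf.2 _ _ hz
        simpa using this
    exact hab (hf.1 ((key a ha).trans (key b hb).symm))
  · have : embWeight (extendTree T u) ℓ
        (Fin.insertNth x (Fin.last n) (Fin.castSucc ∘ g)) = 0 := by
      refine Finset.prod_eq_zero (Finset.mem_univ x) ?_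
      rw [Fin.insertNth_apply_same, degR_extendTree_last, Nat.cast_eq_zero,
        Nat.descFactorial_eq_zero_iff_lt]
      omega
    rw [this, ite_self]

end leaf

/-- The expected observable after one step, multiplied by the total mass `(1 + α) n - 2`, before
the embeddings using the new vertex are analysed. -/
lemma sum_injSum_extend (α : ℝ) {N n : ℕ} {τ : SimpleGraph (Fin (N + 1))} (ℓ : Fin (N + 1) → ℕ)
    {T : SimpleGraph (Fin n)} (hd : ∀ v, 1 ≤ degR T v) :
    ∑ u, ((degR T u : ℝ) - 1 + α) * injSum τ ℓ (extendTree T u) =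
      ((∑ u, ((degR T u : ℝ) - 1 + α)) + ∑ z, (ℓ z : ℝ)) * injSum τ ℓ T +
      ∑ z, (ℓ z : ℝ) * (ℓ z - 1 + α) * injSum τ (Function.update ℓ z (ℓ z - 1)) T +
      ∑ x, leafSum α τ ℓ x T := by
  classical
  have h1 : ∀ u, injSum τ ℓ (extendTree T u) = ∑ g : Fin (N + 1) → Fin n,
      (if IsInjHom τ T g then embWeight (extendTree T u) ℓ (Fin.castSucc ∘ g) else 0) +
      ∑ x, ∑ g : Fin N → Fin n,
        if IsInjHom τ (extendTree T u) (Fin.insertNth x (Fin.last n) (Fin.castSucc ∘ g)) then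
          embWeight (extendTree T u) ℓ (Fin.insertNth x (Fin.last n) (Fin.castSucc ∘ g))
        else 0 := by
    intro u
    rw [injSum, sum_split_last _ fun f hf => if_neg fun h => hf h.1]
    simp only [isInjHom_castSucc]
  rw [Finset.sum_congr rfl fun u _ => by rw [h1 u, mul_add], Finset.sum_add_distrib]
  congr 1
  · simp only [injSum, Finset.mul_sum]
    rw [Finset.sum_comm, Finset.sum_comm (s := (Finset.univ : Finset (Fin (N + 1)))),
      ← Finset.sum_add_distrib]
    refine Finset.sum_congr rfl fun g _ => ?_
    by_cases hg : IsInjHom τ T g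
    · simp only [hg, if_true]
      rw [sum_embWeight_castSucc α hd ℓ g hg.1]
    · simp [hg]
  · simp only [leafSum, Finset.mul_sum]
    rw [Finset.sum_comm]

/-! ### Weights and the partial order -/

section weight

open Classical in
/-- The loose leaves of a decorated graph. -/
def looseSet {V : Type*} [Fintype V] (τ : SimpleGraph V) (ℓ : V → ℕ) : Finset V :=
  Finset.univ.filter fun v => degR τ v = 1 ∧ ℓ v = 0

@[simp] lemma mem_looseSet {V : Type*} [Fintype V] {τ : SimpleGraph V} {ℓ : V → ℕ} {v : V} :
    v ∈ looseSet τ ℓ ↔ degR τ v = 1 ∧ ℓ v = 0 := by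
  simp [looseSet]

lemma weightG_eq {V : Type*} [Fintype V] {τ : SimpleGraph V} {ℓ : V → ℕ}
    (h : 1 < weightG τ ℓ) : weightG τ ℓ = ∑ v, ℓ v + (looseSet τ ℓ).card := by
  classical
  rw [weightG] at h ⊢
  split_ifs at h ⊢
  · exact absurd h (lt_irrefl _)
  · rw [looseSet, Nat.card_eq_fintype_card, Fintype.card_subtype]

lemma weightG_le {V : Type*} [Fintype V] (τ : SimpleGraph V) (ℓ : V → ℕ) {M : ℕ} (h1 : 1 ≤ M)
    (h : ∑ v, ℓ v + (looseSet τ ℓ).card ≤ M) : weightG τ ℓ ≤ M := by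
  classical
  rw [weightG]
  split_ifs
  · exact h1
  · rwa [Nat.card_eq_fintype_card, Fintype.card_subtype, ← looseSet]

lemma card_looseSet_update_le {V : Type*} [Fintype V] [DecidableEq V] (τ : SimpleGraph V)
    (ℓ : V → ℕ) (z : V) (j : ℕ) :
    (looseSet τ (Function.update ℓ z j)).card ≤ (looseSet τ ℓ).card + 1 := by
  refine (Finset.card_le_card (t := insert z (looseSet τ ℓ)) fun v hv => ?_).trans
    (Finset.card_insert_le _ _)
  by_cases hvz : v = z
  · simp [hvz]
  · simpa [hvz, Function.update_of_ne hvz] using hv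

lemma sum_update_pred {V : Type*} [Fintype V] [DecidableEq V] (ℓ : V → ℕ) {z : V}
    (hz : ℓ z ≠ 0) : ∑ v, Function.update ℓ z (ℓ z - 1) v + 1 = ∑ v, ℓ v := by
  rw [Finset.sum_update_of_mem (Finset.mem_univ z),
    ← Finset.add_sum_erase _ ℓ (Finset.mem_univ z), Finset.sdiff_singleton_eq_erase]
  omega

variable {N : ℕ} {τ : SimpleGraph (Fin (N + 1))} {x : Fin (N + 1)} {y : Fin N}

/-- Removing a loose leaf does not increase the number of loose leaves: only its neighbour can
become one. -/
lemma card_looseSet_comap_le (hy : ∀ z, τ.Adj x z ↔ z = x.succAbove y) (ℓ : Fin (N + 1) → ℕ)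
    (hx : x ∈ looseSet τ ℓ) :
    (looseSet (τ.comap x.succAbove) (ℓ ∘ x.succAbove)).card ≤ (looseSet τ ℓ).card := by
  classical
  have h1 : (looseSet (τ.comap x.succAbove) (ℓ ∘ x.succAbove)).map x.succAboveEmb ⊆
      insert (x.succAbove y) ((looseSet τ ℓ).erase x) := by
    intro v hv
    obtain ⟨z, hz, rfl⟩ := Finset.mem_map.1 hv
    rw [Fin.coe_succAboveEmb]
    by_cases hzy : z = y
    · simp [hzy]
    · refine Finset.mem_insert_of_mem (Finset.mem_erase.2 ⟨Fin.succAbove_ne x z, ?_⟩)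
      have hd : degR τ (x.succAbove z) = degR (τ.comap x.succAbove) z := by
        simp only [degR_eq_card, Finset.card_filter]
        rw [Fin.sum_univ_succAbove _ x, if_neg, zero_add]
        · rfl
        · rw [SimpleGraph.adj_comm, hy, Fin.succAbove_right_inj]
          exact hzy
      simpa [hd] using hz
  have h2 := Finset.card_le_card h1
  rw [Finset.card_map] at h2
  refine h2.trans ((Finset.card_insert_le _ _).trans ?_)
  rw [Finset.card_erase_add_one hx]

lemma exists_neighbor_of_degR_eq_one (hx : degR τ x = 1) :
    ∃ y, ∀ z, τ.Adj x z ↔ z = x.succAbove y := by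
  classical
  rw [degR_eq_card, Finset.card_eq_one] at hx
  obtain ⟨a, ha⟩ := hx
  have h1 : ∀ z, τ.Adj x z ↔ z = a := fun z => by
    rw [← Finset.mem_singleton, ← ha, Finset.mem_filter_univ]
  obtain ⟨y, rfl⟩ := Fin.exists_succAbove_eq ((h1 a).2 rfl).ne'
  exact ⟨y, h1⟩

lemma connected_comap_succAbove (hτ : τ.Connected) (hx : degR τ x = 1) :
    (τ.comap x.succAbove).Connected := by
  classical
  rw [degR_eq_degree] at hx
  have h1 := hτ.induce_compl_singleton_of_degree_eq_one hx
  let e : Fin N ≃ ({x}ᶜ : Set (Fin (N + 1))) := finSuccAboveEquiv x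
  let e' : τ.comap x.succAbove ≃g τ.induce ({x}ᶜ : Set (Fin (N + 1))) := ⟨e, fun {_ _} => Iff.rfl⟩
  exact e'.connected_iff.2 h1

lemma declt_update {n : ℕ} {τ : SimpleGraph (Fin n)} {ℓ : Fin n → ℕ}
    (hw : 1 < weightG τ ℓ) {z : Fin n} (hz : ℓ z ≠ 0) :
    DecLt ⟨n, τ, Function.update ℓ z (ℓ z - 1)⟩ ⟨n, τ, ℓ⟩ := by
  have h1 := sum_update_pred ℓ hz
  have h2 : weightG τ (Function.update ℓ z (ℓ z - 1)) ≤ weightG τ ℓ := by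
    refine weightG_le _ _ hw.le ?_
    rw [weightG_eq hw]
    have := card_looseSet_update_le τ ℓ z (ℓ z - 1)
    omega
  rcases h2.lt_or_eq with h | h
  · exact Or.inl ⟨h, le_rfl⟩
  · refine Or.inr (Or.inr ⟨h, rfl, ?_⟩)
    simp only [DecTree.decSum]
    omega

lemma sum_comp_succAbove (ℓ : Fin (N + 1) → ℕ) (hℓ : ℓ x = 0) :
    ∑ v, (ℓ ∘ x.succAbove) v = ∑ v, ℓ v := by
  rw [Fin.sum_univ_succAbove ℓ x, hℓ, zero_add]
  rfl

lemma declt_of_wt_le {σ τ : DecTree} (h : σ.wt ≤ τ.wt) (hn : σ.n < τ.n) : DecLt σ τ := by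
  rcases h.lt_or_eq with h | h
  · exact Or.inl ⟨h, hn.le⟩
  · exact Or.inr (Or.inl ⟨h, hn⟩)

lemma declt_comap (hy : ∀ z, τ.Adj x z ↔ z = x.succAbove y) {ℓ : Fin (N + 1) → ℕ}
    (hw : 1 < weightG τ ℓ) (hx : x ∈ looseSet τ ℓ) :
    DecLt ⟨N, τ.comap x.succAbove, ℓ ∘ x.succAbove⟩ ⟨N + 1, τ, ℓ⟩ := by
  refine declt_of_wt_le (weightG_le _ _ hw.le ?_) (Nat.lt_succ_self N)
  have h1 := card_looseSet_comap_le hy ℓ hx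
  have h2 := sum_comp_succAbove ℓ (mem_looseSet.1 hx).2
  have h3 := weightG_eq hw
  simp only [DecTree.wt]
  omega

lemma declt_comap_update (hy : ∀ z, τ.Adj x z ↔ z = x.succAbove y) {ℓ : Fin (N + 1) → ℕ}
    (hw : 1 < weightG τ ℓ) (hx : x ∈ looseSet τ ℓ) (hℓ : ℓ (x.succAbove y) ≠ 0) :
    DecLt ⟨N, τ.comap x.succAbove,
      Function.update (ℓ ∘ x.succAbove) y (ℓ (x.succAbove y) - 1)⟩ ⟨N + 1, τ, ℓ⟩ := by
  refine declt_of_wt_le (weightG_le _ _ hw.le ?_) (Nat.lt_succ_self N)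
  have h1 := card_looseSet_comap_le hy ℓ hx
  have h2 := sum_comp_succAbove ℓ (mem_looseSet.1 hx).2
  have h3 := weightG_eq hw
  have h4 := card_looseSet_update_le (τ.comap x.succAbove) (ℓ ∘ x.succAbove) y
    (ℓ (x.succAbove y) - 1)
  have h5 := sum_update_pred (ℓ ∘ x.succAbove) (z := y) hℓ
  rw [Function.comp_apply] at h5
  simp only [DecTree.wt]
  omega

/-- The coefficient of `τ ∖ x` in the recurrence is nonnegative. It could only fail to be so for the
single edge with both decorations `0`, which has weight `1`. -/
lemma coeff_nonneg {α : ℝ} (hα : 0 < α) (hτ : τ.Connected)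
    (hy : ∀ z, τ.Adj x z ↔ z = x.succAbove y) {ℓ : Fin (N + 1) → ℕ} (hw : 1 < weightG τ ℓ)
    (hx : x ∈ looseSet τ ℓ) :
    0 ≤ (ℓ (x.succAbove y) : ℝ) + α + degR τ (x.succAbove y) - 2 := by
  classical
  have hd := degR_comap_succAbove hy
  have key : 2 ≤ ℓ (x.succAbove y) + degR τ (x.succAbove y) := by
    by_contra! hlt
    have h0 : ℓ (x.succAbove y) = 0 := by omega
    have h1 : degR (τ.comap x.succAbove) y = 0 := by omega
    have hc := connected_comap_succAbove hτ (mem_looseSet.1 hx).1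
    have hN : N = 1 := by
      by_contra hN
      have : Nontrivial (Fin N) := Fin.nontrivial_iff_two_le.2 (by have := y.pos; omega)
      have := hc.preconnected.degree_pos_of_nontrivial y
      rw [← degR_eq_degree, h1] at this
      exact lt_irrefl _ this
    subst hN
    have hz : ∀ v, ℓ v = 0 := by
      intro v
      refine x.succAboveCases (α := fun v => ℓ v = 0) (mem_looseSet.1 hx).2 (fun z => ?_) v
      rw [Subsingleton.elim z y]
      exact h0
    rw [weightG, if_pos ⟨by simp, hz⟩] at hw
    exact lt_irrefl _ hw
  have : (2 : ℝ) ≤ ℓ (x.succAbove y) + degR τ (x.succAbove y) := by exact_mod_cast key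
  linarith

end weight

/-! ### The deterministic recurrence -/

/-- A function of trees which is a finite combination, with nonnegative coefficients, of observables
`F_σ` with `σ ≺ τ`. -/
def IsLower (τ : DecTree) (g : ∀ n, SimpleGraph (Fin n) → ℝ) : Prop :=
  ∃ c : DecTree →₀ ℝ, (∀ σ, 0 ≤ c σ) ∧ (∀ σ, c σ ≠ 0 → DecLt σ τ) ∧
    ∀ n, 2 ≤ n → ∀ T : SimpleGraph (Fin n), T.IsTree → g n T = c.sum fun σ r => r * σ.obs T

namespace IsLower

variable {τ : DecTree}

lemma add {g₁ g₂ : ∀ n, SimpleGraph (Fin n) → ℝ} (h₁ : IsLower τ g₁) (h₂ : IsLower τ g₂) :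
    IsLower τ fun n T => g₁ n T + g₂ n T := by
  classical
  obtain ⟨c₁, p₁, l₁, e₁⟩ := h₁
  obtain ⟨c₂, p₂, l₂, e₂⟩ := h₂
  refine ⟨c₁ + c₂, fun σ => add_nonneg (p₁ σ) (p₂ σ), fun σ h => ?_, fun n hn T hT => ?_⟩
  · by_cases h1 : c₁ σ = 0
    · exact l₂ σ fun h2 => h (by simp [h1, h2])
    · exact l₁ σ h1
  · beta_reduce
    rw [e₁ n hn T hT, e₂ n hn T hT, Finsupp.sum_add_index' (by simp) (by intros; ring)]

lemma zero : IsLower τ fun _ _ => 0 :=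
  ⟨0, by simp, by simp, by simp⟩

lemma sum {ι : Type*} (s : Finset ι) {g : ι → ∀ n, SimpleGraph (Fin n) → ℝ}
    (h : ∀ i ∈ s, IsLower τ (g i)) : IsLower τ fun n T => ∑ i ∈ s, g i n T := by
  classical
  induction s using Finset.induction_on with
  | empty => simpa using zero
  | insert a s ha ih =>
    simp only [Finset.sum_insert ha]
    exact (h a (Finset.mem_insert_self a s)).add
      (ih fun i hi => h i (Finset.mem_insert_of_mem hi))

lemma of_obs {r : ℝ} (hr : 0 ≤ r) {σ : DecTree} (h : r ≠ 0 → DecLt σ τ) :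
    IsLower τ fun _ T => r * σ.obs T := by
  classical
  refine ⟨Finsupp.single σ r, fun ρ => ?_, fun ρ hρ => ?_, fun n _ T _ => ?_⟩
  · rw [Finsupp.single_apply]
    split_ifs <;> simp [hr]
  · obtain ⟨rfl, h'⟩ := (Finsupp.single_apply_ne_zero).1 hρ
    exact h h'
  · rw [Finsupp.sum_single_index (by simp)]

lemma congr {g₁ g₂ : ∀ n, SimpleGraph (Fin n) → ℝ} (h₁ : IsLower τ g₁)
    (h : ∀ n, 2 ≤ n → ∀ T : SimpleGraph (Fin n), T.IsTree → g₂ n T = g₁ n T) :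
    IsLower τ g₂ := by
  obtain ⟨c, p, l, e⟩ := h₁
  exact ⟨c, p, l, fun n hn T hT => (h n hn T hT).trans (e n hn T hT)⟩

end IsLower

lemma pred_coeff_nonneg {α : ℝ} (hα : 0 < α) (l : ℕ) : 0 ≤ (l : ℝ) * (l - 1 + α) := by
  cases l with
  | zero => simp
  | succ l =>
    have : (((l + 1 : ℕ) : ℝ) - 1 + α) = l + α := by push_cast; ring
    rw [this]
    positivity

lemma isLower_update {α : ℝ} (hα : 0 < α) {n : ℕ} {τ : SimpleGraph (Fin n)} {ℓ : Fin n → ℕ}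
    (hτ : τ.Connected) (hw : 1 < weightG τ ℓ) (z : Fin n) :
    IsLower ⟨n, τ, ℓ⟩ fun _ T =>
      (ℓ z : ℝ) * (ℓ z - 1 + α) * injSum τ (Function.update ℓ z (ℓ z - 1)) T := by
  refine (IsLower.of_obs (σ := ⟨n, τ, Function.update ℓ z (ℓ z - 1)⟩) (pred_coeff_nonneg hα (ℓ z))
    fun h => declt_update hw fun h0 => h (by simp [h0])).congr fun m _ T hT => ?_
  rw [DecTree.obs, obsG_eq_injSum _ hτ hT.isAcyclic]

/-- Each loose leaf contributes one copy of the observable, up to lower terms; the other vertices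
contribute nothing. -/
lemma isLower_leafSum {α : ℝ} (hα : 0 < α) {N : ℕ} {τ : SimpleGraph (Fin (N + 1))}
    {ℓ : Fin (N + 1) → ℕ} (hτ : τ.Connected) (hw : 1 < weightG τ ℓ) (x : Fin (N + 1)) :
    IsLower ⟨N + 1, τ, ℓ⟩ fun _ T =>
      leafSum α τ ℓ x T - (if x ∈ looseSet τ ℓ then 1 else 0) * injSum τ ℓ T := by
  by_cases hx : x ∈ looseSet τ ℓ
  · obtain ⟨hx1, hx2⟩ := mem_looseSet.1 hx
    obtain ⟨y, hy⟩ := exists_neighbor_of_degR_eq_one hx1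
    have hc := connected_comap_succAbove hτ hx1
    refine ((IsLower.of_obs (coeff_nonneg hα hτ hy hw hx) fun _ => declt_comap hy hw hx).add
      (IsLower.of_obs (pred_coeff_nonneg hα (ℓ (x.succAbove y))) fun h =>
        declt_comap_update hy hw hx fun h0 => h (by simp [h0]))).congr fun m hm T hT => ?_
    rw [leafSum_of_loose α hT.isAcyclic (one_le_degR hm hT) hy hc ℓ hx2, if_pos hx, DecTree.obs,
      DecTree.obs, obsG_eq_injSum _ hc hT.isAcyclic, obsG_eq_injSum _ hc hT.isAcyclic]
    ring
  · refine IsLower.zero.congr fun m hm T hT => ?_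
    rw [leafSum_of_not_loose α T hτ ℓ hw fun h => hx (mem_looseSet.2 h), if_neg hx]
    ring

lemma sum_attach_weight (α : ℝ) {n : ℕ} {T : SimpleGraph (Fin n)} (hT : T.IsTree) :
    ∑ u, ((degR T u : ℝ) - 1 + α) = (1 + α) * n - 2 := by
  rw [Finset.sum_add_distrib, Finset.sum_sub_distrib, sum_degR hT]
  simp
  ring

/-- The recurrence for one deterministic tree, multiplied by the total mass `(1 + α) n - 2`. -/
lemma one_step {α : ℝ} (hα : 0 < α) (τ : DecTree) (hτ : τ.tree.IsTree) (hw : 1 < τ.wt) :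
    IsLower τ fun n T => ∑ u, ((degR T u : ℝ) - 1 + α) * τ.obs (extendTree T u) -
      ((1 + α) * n - 2 + τ.wt) * τ.obs T := by
  obtain ⟨N, τ, ℓ⟩ := τ
  simp only [DecTree.wt, DecTree.obs] at *
  cases N with
  | zero => exact (hτ.connected.nonempty.some).elim0
  | succ N =>
    refine ((IsLower.sum Finset.univ fun z _ => isLower_update hα hτ.connected hw z).add
      (IsLower.sum Finset.univ fun x _ => isLower_leafSum hα hτ.connected hw x)).congr
      fun n hn T hT => ?_
    simp only [obsG_eq_injSum _ hτ.connected (extendTree_isTree T _ hT).isAcyclic,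
      obsG_eq_injSum _ hτ.connected hT.isAcyclic]
    rw [sum_injSum_extend α ℓ (one_le_degR hn hT), sum_attach_weight α hT, weightG_eq hw,
      Finset.sum_sub_distrib, ← Finset.sum_mul]
    simp only [Finset.sum_ite_mem, Finset.univ_inter, Finset.sum_const, nsmul_eq_mul, mul_one]
    push_cast
    ring

/-! ### Base cases -/

lemma sum_fun_fin_one {n : ℕ} (h : (Fin 1 → Fin n) → ℝ) :
    ∑ g, h g = ∑ v, h fun _ => v := by
  rw [← (Equiv.funUnique (Fin 1) (Fin n)).symm.sum_comp]
  rfl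

lemma isInjHom_fin_one {W : Type*} (τ : SimpleGraph (Fin 1)) (T : SimpleGraph W) (f : Fin 1 → W) :
    IsInjHom τ T f :=
  ⟨Function.injective_of_subsingleton f, fun a b h => absurd (Subsingleton.elim a b) h.ne⟩

lemma connected_fin_one (τ : SimpleGraph (Fin 1)) : τ.Connected := by
  rw [SimpleGraph.connected_iff_exists_forall_reachable]
  refine ⟨0, fun w => ?_⟩
  rw [Subsingleton.elim w 0]

lemma injSum_fin_one {n : ℕ} (τ : SimpleGraph (Fin 1)) (ℓ : Fin 1 → ℕ) (T : SimpleGraph (Fin n)) :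
    injSum τ ℓ T = ∑ v, ((degR T v - 1).descFactorial (ℓ 0) : ℝ) := by
  rw [injSum, sum_fun_fin_one]
  simp [isInjHom_fin_one, embWeight]

lemma obs_one_zero {n : ℕ} {T : SimpleGraph (Fin n)} (hT : T.IsTree) (τ : DecTree)
    (h1 : τ.n = 1) (hd : ∀ v, τ.dec v = 0) : τ.obs T = n := by
  obtain ⟨N, τ, ℓ⟩ := τ
  subst h1
  rw [DecTree.obs, obsG_eq_injSum _ (connected_fin_one τ) hT.isAcyclic, injSum_fin_one]
  simp only at hd
  simp [hd 0]

lemma obs_one_one {n : ℕ} (hn : 2 ≤ n) {T : SimpleGraph (Fin n)} (hT : T.IsTree) (τ : DecTree)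
    (h1 : τ.n = 1) (hd : ∀ v, τ.dec v = 1) : τ.obs T = (n : ℝ) - 2 := by
  obtain ⟨N, τ, ℓ⟩ := τ
  subst h1
  rw [DecTree.obs, obsG_eq_injSum _ (connected_fin_one τ) hT.isAcyclic, injSum_fin_one]
  simp only at hd
  have : ∀ v, (((degR T v - 1).descFactorial 1 : ℕ) : ℝ) = degR T v - 1 := fun v => by
    rw [Nat.descFactorial_one, Nat.cast_sub (one_le_degR hn hT v), Nat.cast_one]
  simp only [hd 0, this]
  rw [Finset.sum_sub_distrib, sum_degR hT]
  simp
  ring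

lemma obs_two {n : ℕ} {T : SimpleGraph (Fin n)} (hT : T.IsTree) (τ : DecTree)
    (h2 : τ.n = 2) (hτ : τ.tree.IsTree) (hd : ∀ v, τ.dec v = 0) :
    τ.obs T = 2 * (n : ℝ) - 2 := by
  classical
  obtain ⟨N, τ, ℓ⟩ := τ
  subst h2
  simp only at hd hτ
  have h01 : τ.Adj 0 1 := by
    have h := one_le_degR le_rfl hτ 0
    rw [degR_eq_card, Nat.succ_le_iff, Finset.card_pos] at h
    obtain ⟨w, hw⟩ := h
    rw [Finset.mem_filter_univ] at hw
    have hw1 : w = 1 := by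
      have := hw.ne
      omega
    rwa [hw1] at hw
  have hy : ∀ z, τ.Adj 0 z ↔ z = (0 : Fin 2).succAbove (0 : Fin 1) := by
    intro z
    fin_cases z
    · simp
    · simpa using h01
  have hdeg : degR τ ((0 : Fin 2).succAbove (0 : Fin 1)) = 1 := by
    rw [degR_comap_succAbove hy, degR_eq_card, Nat.add_eq_right, Finset.card_eq_zero,
      Finset.filter_eq_empty_iff]
    intro z _ h
    exact h.ne (Subsingleton.elim _ _)
  rw [DecTree.obs, obsG_eq_injSum _ hτ.connected hT.isAcyclic,
    injSum_eq_sum_extensions hT.isAcyclic hy (connected_fin_one _) ℓ (hd 0), sum_fun_fin_one, hdeg,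
    ← sum_degR hT]
  refine Finset.sum_congr rfl fun v _ => ?_
  rw [if_pos (isInjHom_fin_one _ _ _)]
  simp [embWeight, hd]

/-! ### The chain -/

lemma attach_total_pos {α : ℝ} (hα : 0 < α) {n : ℕ} (hn : 2 ≤ n) :
    0 < (1 + α) * (n : ℝ) - 2 := by
  have : (2 : ℝ) ≤ n := by exact_mod_cast hn
  nlinarith

lemma integral_stepMeasure {α : ℝ} (hα : 0 < α) {n : ℕ} (hn : 2 ≤ n) {T : SimpleGraph (Fin n)}
    (hT : T.IsTree) (f : SimpleGraph (Fin (n + 1)) → ℝ) :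
    ∫ G, f G ∂stepMeasure α T =
      ∑ u, ((degR T u : ℝ) - 1 + α) / ((1 + α) * (n : ℝ) - 2) * f (extendTree T u) := by
  have hf : StronglyMeasurable f := by
    have : Measurable f := fun _ _ => trivial
    exact this.stronglyMeasurable
  have hs : MeasurableSingletonClass (SimpleGraph (Fin (n + 1))) := ⟨fun _ => trivial⟩
  rw [stepMeasure, integral_finsetSum_measure]
  · refine Finset.sum_congr rfl fun u _ => ?_
    rw [integral_smul_measure, integral_dirac' _ _ hf, ENNReal.toReal_ofReal, smul_eq_mul]
    have h1 : (1 : ℝ) ≤ degR T u := by exact_mod_cast one_le_degR hn hT u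
    exact div_nonneg (by linarith) (attach_total_pos hα hn).le
  · intro u _
    exact (integrable_dirac (by simp)).smul_measure ENNReal.ofReal_ne_top

/-- The chain consists of trees almost surely: the conditional probability that the next graph is
not a tree vanishes. -/
lemma ae_isTree {α : ℝ} (hα : 0 < α) {k : ℕ} (hk : 2 ≤ k) {S : SimpleGraph (Fin k)} (hS : S.IsTree)
    {Ω : Type*} [MeasurableSpace Ω] {P : Measure Ω} {T : (m : ℕ) → Ω → SimpleGraph (Fin (k + m))}
    (hT : IsPAChain α S P T) (m : ℕ) : ∀ᵐ ω ∂P, (T m ω).IsTree := by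
  classical
  have := hT.isProb
  induction m with
  | zero =>
    filter_upwards [hT.init] with ω h
    rw [h]
    exact hS
  | succ m ih =>
    let f : SimpleGraph (Fin (k + (m + 1))) → ℝ := fun G => if G.IsTree then 0 else 1
    have hf : Measurable f := fun _ _ => trivial
    have hm : natFilt T m ≤ _ := iSup_le fun j => iSup_le fun _ => (hT.meas j).comap_le
    have h0 : P[(fun ω => f (T (m + 1) ω))|natFilt T m] =ᵐ[P] 0 := by
      filter_upwards [hT.step m f, ih] with ω h1 h2
      rw [h1, integral_stepMeasure hα (hk.trans (Nat.le_add_right k m)) h2]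
      refine Finset.sum_eq_zero fun u _ => ?_
      have : f (extendTree (T m ω) u) = 0 := if_pos (extendTree_isTree _ u h2)
      rw [this, mul_zero]
    have hint : Integrable (fun ω => f (T (m + 1) ω)) P := by
      refine Integrable.of_bound (hf.comp (hT.meas (m + 1))).aestronglyMeasurable 1
        (Eventually.of_forall fun ω => ?_)
      simp only [f]
      split_ifs <;> simp
    have h1 : ∫ ω, f (T (m + 1) ω) ∂P = 0 := by
      rw [← integral_condExp hm, integral_congr_ae h0]
      simp
    rw [integral_eq_zero_iff_of_nonneg
      (fun ω => by simp only [f]; split_ifs <;> simp) hint] at h1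
    filter_upwards [h1] with ω hω
    by_contra hne
    simp [f, hne] at hω

/-- **Proposition 3.3.** There is a family of nonnegative constants
`c(σ,τ)`, supported on pairs `σ ≺ τ` (finitely many for each `τ`), depending only on `α`,
such that for every seed of size `k ≥ 2`, every decorated tree `τ` with `w(τ) > 1` and
every `n = k + m ≥ k`, the conditional expectation of `F_τ(T_{n+1})` given the past equals
`(1 + w(τ)/((1+α)n-2))·F_τ(T_n) + (1/((1+α)n-2))·Σ_{σ≺τ} c(σ,τ)·F_σ(T_n)`; moreover the
three base cases hold. -/
theorem recurrence_first_moment (α : ℝ) (hα : 0 < α) :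
    ∃ c : DecTree → DecTree → ℝ,
      (∀ σ τ, 0 ≤ c σ τ) ∧
      (∀ σ τ, c σ τ ≠ 0 → DecLt σ τ) ∧
      (∀ τ, {σ | c σ τ ≠ 0}.Finite) ∧
      (∀ (k : ℕ), 2 ≤ k → ∀ (S : SimpleGraph (Fin k)), S.IsTree →
        ∀ {Ω : Type*} [MeasurableSpace Ω] (P : Measure Ω)
          (T : (m : ℕ) → Ω → SimpleGraph (Fin (k + m))),
          IsPAChain α S P T →
          ∀ τ : DecTree, τ.tree.IsTree → 1 < τ.wt → ∀ m : ℕ,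
            P[(fun ω => τ.obs (T (m + 1) ω))|natFilt T m] =ᵐ[P]
              fun ω =>
                (1 + (τ.wt : ℝ) / ((1 + α) * ((k + m : ℕ) : ℝ) - 2)) * τ.obs (T m ω) +
                  (1 / ((1 + α) * ((k + m : ℕ) : ℝ) - 2)) *
                    ∑ᶠ σ : DecTree, c σ τ * σ.obs (T m ω)) ∧
      (∀ (n : ℕ), 2 ≤ n → ∀ T : SimpleGraph (Fin n), T.IsTree →
        (∀ τ : DecTree, τ.n = 1 → (∀ v, τ.dec v = 0) → τ.obs T = (n : ℝ)) ∧
        (∀ τ : DecTree, τ.n = 1 → (∀ v, τ.dec v = 1) → τ.obs T = (n : ℝ) - 2) ∧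
        (∀ τ : DecTree, τ.n = 2 → τ.tree.IsTree → (∀ v, τ.dec v = 0) →
          τ.obs T = 2 * (n : ℝ) - 2)) := by
  have hex : ∀ τ : DecTree, ∃ c : DecTree →₀ ℝ, (∀ σ, 0 ≤ c σ) ∧ (∀ σ, c σ ≠ 0 → DecLt σ τ) ∧
      (τ.tree.IsTree → 1 < τ.wt → ∀ n, 2 ≤ n → ∀ T : SimpleGraph (Fin n), T.IsTree →
        ∑ u, ((degR T u : ℝ) - 1 + α) * τ.obs (extendTree T u) -
          ((1 + α) * n - 2 + τ.wt) * τ.obs T = c.sum fun σ r => r * σ.obs T) := by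
    intro τ
    by_cases h : τ.tree.IsTree ∧ 1 < τ.wt
    · obtain ⟨c, h1, h2, h3⟩ := one_step hα τ h.1 h.2
      exact ⟨c, h1, h2, fun _ _ => h3⟩
    · exact ⟨0, by simp, by simp, fun h1 h2 => absurd ⟨h1, h2⟩ h⟩
  choose c hc0 hclt hc using hex
  refine ⟨fun σ τ => c τ σ, fun σ τ => hc0 τ σ, fun σ τ => hclt τ σ,
    fun τ => (c τ).hasFiniteSupport, ?_, ?_⟩
  · intro k hk S hS Ω _ P T hT τ hτ hw m
    filter_upwards [hT.step m (fun G => τ.obs G), ae_isTree hα hk hS hT m] with ω h1 h2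
    have hn : 2 ≤ k + m := hk.trans (Nat.le_add_right k m)
    have hpos := attach_total_pos hα hn
    have h3 := hc τ hτ hw _ hn _ h2
    have h4 : ∑ᶠ σ : DecTree, c τ σ * σ.obs (T m ω) =
        (c τ).sum fun σ r => r * σ.obs (T m ω) := by
      refine finsum_eq_sum_of_support_subset _ fun σ hσ => ?_
      rw [Finset.mem_coe, Finsupp.mem_support_iff]
      exact left_ne_zero_of_mul hσ
    rw [h1, integral_stepMeasure hα hn h2, h4, ← h3]
    simp only [div_mul_eq_mul_div]
    rw [← Finset.sum_div]
    field_simp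
    ring
  · intro n hn T hT
    exact ⟨obs_one_zero hT, obs_one_one hn hT, obs_two hT⟩

end AffinePA
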